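/- Let G be a non-cyclic finite group of odd order n. Then 2·ψ(G) < ψ(C_n). -/

import Mathlib

/-- `psi G` is the sum of the orders of all elements of the finite group `G`. -/
noncomputable def psi (G : Type*) [Group G] [Fintype G] : ℕ := ∑ x : G, orderOf x

/-- `psiC n` is the sum of the orders of all elements of the cyclic group `C_n`. -/
noncomputable def psiC (n : ℕ) : ℕ := ∑ k ∈ Finset.range n, addOrderOf (k : ZMod n)

/-!
Let `G` be a counterexample of odd order `n` none of whose proper subgroups is a counterexample, and
let `p` be the largest prime divisor of `n`. Since `ψ(C_n) = ∏ (q ^ (2 a + 1) + 1) / (q + 1)` over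
the prime powers `q ^ a` exactly dividing `n`, telescoping gives `ψ(C_n) ≥ 3 n² / (p + 1)`. As
`ψ(C_n) ≤ 2 ψ(G)`, averaging yields an element `x` with `[G : ⟨x⟩] ≤ 2 (p + 1) / 3 < p`. Then `⟨x⟩`
contains a Sylow `p`-subgroup `P` of `G`, which is normal because its normalizer has index less
than `p`.

By Schur–Zassenhaus `P` has a complement `H`. An element of `H` that does not centralize the cyclic
`p`-group `P` fixes no nontrivial element of it, so with `Z = C_H(P)`
`ψ(G) = ψ(P) ψ(Z) + |P| (ψ(H) - ψ(Z))`. Hence `ψ(G) ≤ ψ(P) ψ(H)`, which contradicts minimality when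
`H` is not cyclic. If `H` is cyclic, then `Z ≠ H`, so `3 ψ(Z) ≤ ψ(H)`, while `4 |P| < ψ(P)` as
`p ≥ 5`; thus `2 ψ(G) < ψ(P) ψ(H) = ψ(C_n)`.
-/

section Psi

variable {G H : Type*} [Group G] [Fintype G] [Group H] [Fintype H]

theorem card_le_psi : Nat.card G ≤ psi G := by
  rw [Nat.card_eq_fintype_card, ← Finset.card_univ, Finset.card_eq_sum_ones]
  exact Finset.sum_le_sum fun x _ => orderOf_pos x

theorem psi_subgroup_eq_sum_filter (K : Subgroup G) [Fintype K] [DecidablePred (· ∈ K)] :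
    psi K = ∑ x : G with x ∈ K, orderOf x := by
  rw [Finset.sum_subtype (p := (· ∈ K)) (F := inferInstance) _ (by simp)]
  simp only [psi, Subgroup.orderOf_coe]

theorem psi_subgroup_le (K : Subgroup G) [Fintype K] : psi K ≤ psi G := by
  classical
  rw [psi_subgroup_eq_sum_filter]
  exact Finset.sum_le_sum_of_subset (Finset.filter_subset _ _)

theorem psi_prod_of_coprime (h : (Nat.card G).Coprime (Nat.card H)) :
    psi (G × H) = psi G * psi H := by
  rw [psi, psi, psi, Finset.sum_mul_sum, Fintype.sum_prod_type]
  refine Finset.sum_congr rfl fun x _ => Finset.sum_congr rfl fun y _ => ?_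
  rw [Prod.orderOf]
  exact (Nat.Coprime.of_dvd (orderOf_dvd_natCard x) (orderOf_dvd_natCard y) h).lcm_eq_mul

theorem exists_psi_mul_index_zpowers_le_card_sq :
    ∃ x : G, psi G * (Subgroup.zpowers x).index ≤ Nat.card G ^ 2 := by
  obtain ⟨x, -, hx⟩ := Finset.exists_max_image (Finset.univ : Finset G) orderOf
    Finset.univ_nonempty
  have hψ : psi G ≤ Nat.card G * orderOf x := by
    rw [psi, Nat.card_eq_fintype_card, ← Finset.card_univ]
    exact Finset.sum_le_card_nsmul _ _ _ hx
  refine ⟨x, ?_⟩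
  calc psi G * (Subgroup.zpowers x).index
      ≤ Nat.card G * orderOf x * (Subgroup.zpowers x).index := Nat.mul_le_mul_right _ hψ
    _ = Nat.card G ^ 2 := by
      rw [mul_assoc, ← Nat.card_zpowers, Subgroup.card_mul_index, sq]

end Psi

section Cyclic

theorem psi_eq_psiC_of_isCyclic (G : Type*) [Group G] [Fintype G] [IsCyclic G] :
    psi G = psiC (Nat.card G) := by
  classical
  obtain ⟨g, hg⟩ := IsCyclic.exists_generator (α := G)
  have hcard : orderOf g = Nat.card G := orderOf_eq_card_of_forall_mem_zpowers hg
  rw [psi, psiC, ← IsCyclic.image_range_card hg, Finset.sum_image]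
  · refine Finset.sum_congr rfl fun k _ => ?_
    rw [orderOf_pow, hcard, ZMod.addOrderOf_coe _ Nat.card_pos.ne']
  · rw [← hcard, Finset.coe_range]
    exact pow_injOn_Iio_orderOf

theorem psiC_mul_of_coprime {a b : ℕ} (h : a.Coprime b) : psiC (a * b) = psiC a * psiC b := by
  rcases eq_or_ne a 0 with rfl | ha
  · simp [psiC]
  rcases eq_or_ne b 0 with rfl | hb
  · simp [psiC]
  have : NeZero a := ⟨ha⟩
  have : NeZero b := ⟨hb⟩
  have hcard : (Nat.card (Multiplicative (ZMod a))).Coprime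
      (Nat.card (Multiplicative (ZMod b))) := by simpa using h
  have : IsCyclic (Multiplicative (ZMod a) × Multiplicative (ZMod b)) :=
    Group.isCyclic_prod_iff.2 ⟨inferInstance, inferInstance, hcard⟩
  simpa [psi_eq_psiC_of_isCyclic] using psi_prod_of_coprime hcard

theorem psiC_eq_sum_divisors (n : ℕ) : psiC n = ∑ d ∈ n.divisors, d * d.totient := by
  rcases eq_or_ne n 0 with rfl | hn
  · simp [psiC]
  have : NeZero n := ⟨hn⟩
  have hψ : psi (Multiplicative (ZMod n)) = psiC n := by simp [psi_eq_psiC_of_isCyclic]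
  rw [← hψ, psi, ← Finset.sum_fiberwise_of_maps_to (t := n.divisors) (g := orderOf)]
  · refine Finset.sum_congr rfl fun d hd => ?_
    rw [Finset.sum_congr rfl (fun x hx => (Finset.mem_filter.1 hx).2), Finset.sum_const,
      IsCyclic.card_orderOf_eq_totient, smul_eq_mul, mul_comm]
    simpa using Nat.dvd_of_mem_divisors hd
  · intro x _
    simpa [hn] using orderOf_dvd_card (x := x)

theorem add_one_mul_psiC_prime_pow {p : ℕ} (hp : p.Prime) (a : ℕ) :
    (p + 1) * psiC (p ^ a) = p * (p ^ a) ^ 2 + 1 := by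
  rw [psiC_eq_sum_divisors, Nat.sum_divisors_prime_pow hp]
  induction a with
  | zero => simp
  | succ a ih =>
    rw [Finset.sum_range_succ, mul_add, ih, Nat.totient_prime_pow_succ hp]
    obtain ⟨q, rfl⟩ := Nat.exists_eq_add_one.2 hp.pos
    rw [Nat.add_sub_cancel]
    ring

/-- Each prime `q ∣ n` costs a factor `q / (q + 1)` in `ψ(C_n) / n²`, and the product of
`j / (j + 1)` over all `m ≤ j < k` telescopes to `m / k`. -/
theorem mul_sq_le_mul_psiC {m k : ℕ} (hmk : m ≤ k) {n : ℕ}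
    (hn : n.primeFactors ⊆ Finset.Ico m k) : m * n ^ 2 ≤ k * psiC n := by
  induction k, hmk using Nat.le_induction generalizing n with
  | base =>
    rw [Finset.Ico_self, Finset.subset_empty, Nat.primeFactors_eq_empty] at hn
    rcases hn with rfl | rfl <;> simp [psiC]
  | succ k hmk ih =>
    by_cases hk : k ∈ n.primeFactors
    · obtain ⟨hkp, -, hn0⟩ := Nat.mem_primeFactors.1 hk
      obtain ⟨a, l, hkl, rfl⟩ := Nat.exists_eq_pow_mul_and_not_dvd hn0 k hkp.ne_one
      have hl : l.primeFactors ⊆ Finset.Ico m k := fun q hq => by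
        have hqk : q ≠ k := by
          rintro rfl
          exact hkl (Nat.dvd_of_mem_primeFactors hq)
        have hqn := hn (Nat.primeFactors_mono (dvd_mul_left l _) hn0 hq)
        rw [Finset.mem_Ico] at hqn ⊢
        omega
      rw [psiC_mul_of_coprime ((hkp.coprime_iff_not_dvd.2 hkl).pow_left a)]
      calc m * (k ^ a * l) ^ 2 = (k ^ a) ^ 2 * (m * l ^ 2) := by ring
        _ ≤ (k ^ a) ^ 2 * (k * psiC l) := Nat.mul_le_mul_left _ (ih hl)
        _ ≤ (k * (k ^ a) ^ 2 + 1) * psiC l := by linarith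
        _ = (k + 1) * (psiC (k ^ a) * psiC l) := by
          rw [← add_one_mul_psiC_prime_pow hkp, mul_assoc]
    · have hn' : n.primeFactors ⊆ Finset.Ico m k := fun q hq => by
        have hqk : q ≠ k := ne_of_mem_of_not_mem hq hk
        have hqn := hn hq
        rw [Finset.mem_Ico] at hqn ⊢
        omega
      exact (ih hn').trans (Nat.mul_le_mul_right _ k.le_succ)

theorem mul_psiC_le_psiC_mul (r m : ℕ) : r * psiC m ≤ psiC (r * m) := by
  rcases eq_or_ne (r * m) 0 with h0 | h0
  · rcases mul_eq_zero.1 h0 with rfl | rfl <;> simp [psiC]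
  have : NeZero (r * m) := ⟨h0⟩
  have hperiodic (s : ℕ) : ∑ k ∈ Finset.range (s * m), addOrderOf (k : ZMod m) = s * psiC m := by
    induction s with
    | zero => simp
    | succ s ih =>
      rw [add_mul, one_mul, Finset.sum_range_add, ih, add_mul, one_mul]
      simp [psiC]
  rw [← hperiodic, psiC]
  refine Finset.sum_le_sum fun k _ => Nat.le_of_dvd (addOrderOf_pos _) ?_
  simpa using addOrderOf_map_dvd
    (ZMod.castHom (dvd_mul_left m r) (ZMod m)).toAddMonoidHom (k : ZMod (r * m))

theorem index_mul_psi_le_psi {G : Type*} [Group G] [Fintype G] [IsCyclic G] (K : Subgroup G)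
    [Fintype K] : K.index * psi K ≤ psi G := by
  rw [psi_eq_psiC_of_isCyclic, psi_eq_psiC_of_isCyclic, ← K.index_mul_card]
  exact mul_psiC_le_psiC_mul _ _

theorem pred_mul_card_lt_psi_of_isPGroup {P : Type*} [Group P] [Fintype P] [IsCyclic P]
    [Nontrivial P] {p : ℕ} [Fact p.Prime] (hP : IsPGroup p P) : (p - 1) * Nat.card P < psi P := by
  have hp : p.Prime := Fact.out
  obtain ⟨a, ha, hcard⟩ := hP.nontrivial_iff_card.1 inferInstance
  have hpP : p ≤ Nat.card P := hcard ▸ Nat.le_self_pow ha.ne' p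
  have hψ : (p + 1) * psi P = p * Nat.card P ^ 2 + 1 := by
    rw [psi_eq_psiC_of_isCyclic, hcard, add_one_mul_psiC_prime_pow hp]
  obtain ⟨q, rfl⟩ := Nat.exists_eq_add_one.2 hp.pos
  rw [Nat.add_sub_cancel]
  nlinarith

end Cyclic

section CoprimeAction

theorem orderOf_mulAut_dvd_card_of_apply_eq_self {P : Type*} [Group P] [Finite P] [IsCyclic P]
    {p : ℕ} [Fact p.Prime] (hP : IsPGroup p P) {σ : MulAut P} {w : P} (hw : w ≠ 1)
    (hσw : σ w = w) : orderOf σ ∣ Nat.card P := by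
  obtain ⟨k, hk⟩ := σ.toMonoidHom.map_cyclic
  have hσ (N : ℕ) (x : P) : (σ ^ N) x = x ^ k ^ N := by
    induction N with
    | zero => simp
    | succ N ih =>
      rw [pow_succ', MulAut.mul_apply, ih, map_zpow, pow_succ', zpow_mul]
      exact congrArg (· ^ k ^ N) (hk x)
  have hpw : p ∣ orderOf w := by
    obtain ⟨i, hi⟩ := IsPGroup.iff_orderOf.1 hP w
    rw [hi]
    refine dvd_pow_self p ?_
    rintro rfl
    exact hw (orderOf_eq_one_iff.1 hi)
  have hpk : (p : ℤ) ∣ k - 1 := by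
    refine (Int.natCast_dvd_natCast.2 hpw).trans (orderOf_dvd_iff_zpow_eq_one.2 ?_)
    rw [zpow_sub_one, mul_inv_eq_one]
    exact (hk w).symm.trans hσw
  have hcard : (Nat.card P : ℤ) ∣ k ^ Nat.card P - 1 := by
    obtain ⟨a, ha⟩ := IsPGroup.iff_card.1 hP
    rw [ha]
    simpa using (pow_dvd_pow (p : ℤ) a.le_succ).trans (dvd_sub_pow_of_dvd_sub hpk a)
  refine orderOf_dvd_of_pow_eq_one (MulEquiv.ext fun x => ?_)
  have hx : x ^ (k ^ Nat.card P - 1) = 1 := orderOf_dvd_iff_zpow_eq_one.1 <|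
    (Int.natCast_dvd_natCast.2 (orderOf_dvd_natCard x)).trans hcard
  rw [hσ, MulAut.one_apply, ← mul_inv_eq_one, ← zpow_sub_one, hx]

variable {G : Type*} [Group G] {p : ℕ} [Fact p.Prime] {P : Subgroup G} [P.Normal]
  [IsCyclic P]

theorem eq_one_of_commute_of_notMem_centralizer [Finite P] (hP : IsPGroup p P) {h : G}
    (hh : (Nat.card P).Coprime (orderOf h)) (hc : h ∉ Subgroup.centralizer (P : Set G)) {w : G}
    (hw : w ∈ P) (hhw : Commute h w) : w = 1 := by
  by_contra hw1
  let σ : MulAut P := MulAut.conjNormal h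
  have hσw : σ ⟨w, hw⟩ = ⟨w, hw⟩ := Subtype.ext <| by
    rw [MulAut.conjNormal_apply, hhw.eq, mul_inv_cancel_right]
  have hσ : σ = 1 := orderOf_eq_one_iff.1 <| Nat.eq_one_of_dvd_coprimes hh
    (orderOf_mulAut_dvd_card_of_apply_eq_self hP (by simpa using hw1) hσw)
    (orderOf_map_dvd MulAut.conjNormal h)
  refine hc (Subgroup.mem_centralizer_iff.2 fun v hv => ?_)
  have hv' := congrArg Subtype.val (DFunLike.congr_fun hσ ⟨v, hv⟩)
  rw [MulAut.conjNormal_apply, MulAut.one_apply] at hv'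
  exact (mul_inv_eq_iff_eq_mul.1 hv').symm

theorem orderOf_mul_eq_of_notMem_centralizer [Finite P] (hP : IsPGroup p P) {h : G}
    (hh : (Nat.card P).Coprime (orderOf h)) (hc : h ∉ Subgroup.centralizer (P : Set G)) {u : G}
    (hu : u ∈ P) : orderOf (u * h) = orderOf h := by
  have hmem (N : ℕ) : (u * h) ^ N ∈ P ↔ h ^ N ∈ P := by
    rw [← QuotientGroup.eq_one_iff, ← QuotientGroup.eq_one_iff, QuotientGroup.mk_pow,
      QuotientGroup.mk_pow, QuotientGroup.mk_mul, (QuotientGroup.eq_one_iff u).2 hu, one_mul]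
  refine Nat.dvd_antisymm (orderOf_dvd_of_pow_eq_one ?_) (orderOf_dvd_of_pow_eq_one ?_)
  · have hw : (u * h) ^ orderOf h ∈ P := (hmem _).2 (pow_orderOf_eq_one h ▸ P.one_mem)
    have huw : Commute u ((u * h) ^ orderOf h) := Subgroup.le_centralizer P hw u hu
    refine eq_one_of_commute_of_notMem_centralizer hP hh hc hw ?_
    simpa using huw.inv_left.mul_left (Commute.self_pow (u * h) (orderOf h))
  · have hw : h ^ orderOf (u * h) ∈ P := (hmem _).1 (pow_orderOf_eq_one (u * h) ▸ P.one_mem)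
    exact orderOf_eq_one_iff.1 <| Nat.eq_one_of_dvd_coprimes hh
      (P.orderOf_dvd_natCard hw) (orderOf_pow_dvd _)

end CoprimeAction

section Complement

variable {G : Type*} [Group G] {P H : Subgroup G}

theorem isCyclic_of_isComplement'_of_le_centralizer [Finite G] [IsCyclic P] [IsCyclic H]
    (hPH : P.IsComplement' H) (hco : (Nat.card P).Coprime (Nat.card H))
    (hc : H ≤ Subgroup.centralizer (P : Set G)) : IsCyclic G := by
  obtain ⟨g, hg⟩ := IsCyclic.exists_generator (α := P)
  obtain ⟨h, hh⟩ := IsCyclic.exists_generator (α := H)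
  have hgo : orderOf (g : G) = Nat.card P :=
    (Subgroup.orderOf_coe g).trans (orderOf_eq_card_of_forall_mem_zpowers hg)
  have hho : orderOf (h : G) = Nat.card H :=
    (Subgroup.orderOf_coe h).trans (orderOf_eq_card_of_forall_mem_zpowers hh)
  have hgh : Commute (g : G) h := Subgroup.mem_centralizer_iff.1 (hc h.2) g g.2
  refine isCyclic_of_orderOf_eq_card ((g : G) * h) ?_
  rw [hgh.orderOf_mul_eq_mul_orderOf_of_coprime (by rwa [hgo, hho]), hgo, hho, hPH.card_mul_card]

variable [Fintype G] [P.Normal] [IsCyclic P] [Fintype P] [Fintype H] {p : ℕ} [Fact p.Prime]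

theorem psi_add_card_mul_psi_centralizer (hP : IsPGroup p P) (hPH : P.IsComplement' H)
    (hco : (Nat.card P).Coprime (Nat.card H)) {Z : Subgroup H} [Fintype Z]
    (hZ : Z = (Subgroup.centralizer (P : Set G)).subgroupOf H) :
    psi G + Nat.card P * psi Z = psi P * psi Z + Nat.card P * psi H := by
  classical
  have hmem (h : H) : h ∈ Z ↔ (h : G) ∈ Subgroup.centralizer (P : Set G) := by
    rw [hZ, Subgroup.mem_subgroupOf]
  have hcoset (h : H) : ∑ u : P, orderOf ((u : G) * h) =
      if h ∈ Z then psi P * orderOf h else Nat.card P * orderOf h := by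
    split_ifs with hz
    · rw [psi, Finset.sum_mul]
      refine Finset.sum_congr rfl fun u _ => ?_
      have hcomm : Commute (u : G) h := Subgroup.mem_centralizer_iff.1 ((hmem h).1 hz) u u.2
      rw [hcomm.orderOf_mul_eq_mul_orderOf_of_coprime, Subgroup.orderOf_coe, Subgroup.orderOf_coe]
      exact Nat.Coprime.of_dvd (P.orderOf_dvd_natCard u.2) (H.orderOf_dvd_natCard h.2) hco
    · rw [Nat.card_eq_fintype_card, ← Finset.card_univ, ← smul_eq_mul, ← Finset.sum_const]
      refine Finset.sum_congr rfl fun u _ => ?_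
      rw [orderOf_mul_eq_of_notMem_centralizer hP _ (mt (hmem h).2 hz) u.2, Subgroup.orderOf_coe]
      exact hco.of_dvd_right (H.orderOf_dvd_natCard h.2)
  have hG : psi G = ∑ h : H, ∑ u : P, orderOf ((u : G) * h) := by
    rw [Finset.sum_comm, ← Fintype.sum_prod_type']
    exact (hPH.sum_comp orderOf).symm
  have hH : psi H = psi Z + ∑ h : H with h ∉ Z, orderOf h := by
    rw [psi_subgroup_eq_sum_filter Z, psi, Finset.sum_filter_add_sum_filter_not]
  rw [hG, Finset.sum_congr rfl fun h _ => hcoset h, Finset.sum_ite, ← Finset.mul_sum,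
    ← Finset.mul_sum, ← psi_subgroup_eq_sum_filter, hH]
  ring

theorem psi_le_psi_mul_psi_of_isComplement' (hP : IsPGroup p P) (hPH : P.IsComplement' H)
    (hco : (Nat.card P).Coprime (Nat.card H)) : psi G ≤ psi P * psi H := by
  classical
  have hψ := psi_add_card_mul_psi_centralizer hP hPH hco rfl
  have hZ := psi_subgroup_le ((Subgroup.centralizer (P : Set G)).subgroupOf H)
  have hcard := card_le_psi (G := P)
  nlinarith

theorem two_mul_psi_lt_psi_mul_psi_of_isComplement' [IsCyclic H] (hP : IsPGroup p P)
    (hp : 5 ≤ p) (hPH : P.IsComplement' H) (hco : (Nat.card P).Coprime (Nat.card H))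
    (hodd : Odd (Nat.card H)) (hG : ¬ IsCyclic G) : 2 * psi G < psi P * psi H := by
  classical
  have hcentral : ¬ H ≤ Subgroup.centralizer (P : Set G) := fun h =>
    hG (isCyclic_of_isComplement'_of_le_centralizer hPH hco h)
  have : Nontrivial P := by
    rw [Subgroup.nontrivial_iff_ne_bot]
    rintro rfl
    exact hcentral fun _ _ => by simp [Subgroup.mem_centralizer_iff]
  let Z : Subgroup H := (Subgroup.centralizer (P : Set G)).subgroupOf H
  have hψ := psi_add_card_mul_psi_centralizer (Z := Z) hP hPH hco rfl
  have hZ : Z ≠ ⊤ := mt Subgroup.subgroupOf_eq_top.1 hcentral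
  have hindex : 3 ≤ Z.index := by
    have h1 : Z.index ≠ 1 := mt Subgroup.index_eq_one.1 hZ
    obtain ⟨k, hk⟩ := hodd.of_dvd_nat Z.index_dvd_card
    omega
  have hψZ : 3 * psi Z ≤ psi H := (Nat.mul_le_mul_right _ hindex).trans (index_mul_psi_le_psi Z)
  have hψZ_pos : 0 < psi Z := Nat.card_pos.trans_le card_le_psi
  have hψP : 4 * Nat.card P < psi P :=
    (Nat.mul_le_mul_right _ (by omega)).trans_lt (pred_mul_card_lt_psi_of_isPGroup hP)
  -- `4ψ(G) = 4ψ(P)z + 4|P|(h - z) < ψ(P)(3z + h) ≤ 2ψ(P)h` for `z = ψ(Z)` and `h = ψ(H)`.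
  nlinarith

end Complement

section LargestPrime

theorem exists_normal_sylow_le_of_index_lt {G : Type*} [Group G] [Finite G] {p : ℕ}
    [Fact p.Prime] {C : Subgroup G} [IsMulCommutative C] (hC : C.index < p) :
    ∃ P : Sylow p G, (P : Subgroup G).Normal ∧ (P : Subgroup G) ≤ C := by
  have hp : p.Prime := Fact.out
  have hCpos : 0 < C.index := Nat.pos_of_ne_zero Subgroup.FiniteIndex.index_ne_zero
  let Q : Sylow p C := default
  have hQ : ¬ p ∣ ((Q : Subgroup C).map C.subtype).index := by
    rw [Subgroup.index_map_subtype]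
    exact hp.not_dvd_mul Q.not_dvd_index (Nat.not_dvd_of_pos_of_lt hCpos hC)
  let P : Sylow p G := (Q.isPGroup'.map C.subtype).toSylow hQ
  have hPC : (P : Subgroup G) ≤ C := Subgroup.map_subtype_le _
  have hCN : C ≤ Subgroup.normalizer (P : Set G) :=
    C.le_centralizer.trans <| (Subgroup.centralizer_le hPC).trans
      (Subgroup.centralizer_le_normalizer _)
  have hlt : (Subgroup.normalizer (P : Set G)).index < p :=
    (Nat.le_of_dvd hCpos (Subgroup.index_dvd_of_le hCN)).trans_lt hC
  have hmod : (Subgroup.normalizer (P : Set G)).index ≡ 1 [MOD p] :=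
    P.card_eq_index_normalizer ▸ card_sylow_modEq_one p G
  have hindex := Nat.ModEq.eq_of_lt_of_lt hmod hlt hp.one_lt
  exact ⟨P, Subgroup.normalizer_eq_top_iff.1 (Subgroup.index_eq_one.1 hindex), hPC⟩

theorem exists_normal_isCyclic_sylow_of_psiC_le {G : Type*} [Group G] [Fintype G] {p : ℕ}
    [Fact p.Prime] (hp : 3 ≤ p) (hG : (Nat.card G).primeFactors ⊆ Finset.Ico 3 (p + 1))
    (hψ : psiC (Nat.card G) ≤ 2 * psi G) :
    ∃ P : Sylow p G, (P : Subgroup G).Normal ∧ IsCyclic P := by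
  obtain ⟨x, hx⟩ := exists_psi_mul_index_zpowers_le_card_sq (G := G)
  have hindex : Nat.card G ^ 2 * (3 * (Subgroup.zpowers x).index) ≤
      Nat.card G ^ 2 * (2 * (p + 1)) :=
    calc Nat.card G ^ 2 * (3 * (Subgroup.zpowers x).index)
        = 3 * Nat.card G ^ 2 * (Subgroup.zpowers x).index := by ring
      _ ≤ (p + 1) * psiC (Nat.card G) * (Subgroup.zpowers x).index :=
        Nat.mul_le_mul_right _ (mul_sq_le_mul_psiC (by omega) hG)
      _ ≤ (p + 1) * (2 * psi G) * (Subgroup.zpowers x).index := by gcongr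
      _ = 2 * (p + 1) * (psi G * (Subgroup.zpowers x).index) := by ring
      _ ≤ 2 * (p + 1) * Nat.card G ^ 2 := Nat.mul_le_mul_left _ hx
      _ = Nat.card G ^ 2 * (2 * (p + 1)) := mul_comm _ _
  have hlt : (Subgroup.zpowers x).index < p := by
    have := Nat.le_of_mul_le_mul_left hindex (pow_pos Nat.card_pos 2)
    omega
  obtain ⟨P, hPn, hPx⟩ := exists_normal_sylow_le_of_index_lt hlt
  exact ⟨P, hPn, Subgroup.isCyclic_of_le hPx⟩

theorem exists_mem_primeFactors_subset_Ico {n : ℕ} (hodd : Odd n) (hn : n ≠ 1) :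
    ∃ p ∈ n.primeFactors, n.primeFactors ⊆ Finset.Ico 3 (p + 1) := by
  have hne : n.primeFactors.Nonempty :=
    Nat.nonempty_primeFactors.2 (Nat.one_lt_iff_ne_zero_and_ne_one.2 ⟨hodd.pos.ne', hn⟩)
  refine ⟨_, n.primeFactors.max'_mem hne, fun q hq => Finset.mem_Ico.2
    ⟨?_, Nat.lt_succ_of_le (n.primeFactors.le_max' q hq)⟩⟩
  exact (Nat.prime_of_mem_primeFactors hq).two_le.lt_of_ne'
    (hodd.ne_two_of_dvd_nat (Nat.dvd_of_mem_primeFactors hq))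

theorem five_le_of_isCyclic_sylow {G : Type*} [Group G] [Finite G] (hG : ¬ IsCyclic G) {p : ℕ}
    [Fact p.Prime] (hp : 3 ≤ p) (hmax : (Nat.card G).primeFactors ⊆ Finset.Ico 3 (p + 1))
    (P : Sylow p G) [IsCyclic P] : 5 ≤ p := by
  refine Nat.Prime.five_le_of_ne_two_of_ne_three Fact.out (by omega) ?_
  rintro rfl
  have hindex : (P : Subgroup G).index = 1 := by
    refine Nat.eq_one_iff_not_exists_prime_dvd.2 fun q hq hqP => ?_
    have hqG := Nat.mem_primeFactors.2
      ⟨hq, hqP.trans (P : Subgroup G).index_dvd_card, Nat.card_pos.ne'⟩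
    have hq3 := Finset.mem_Ico.1 (hmax hqG)
    obtain rfl : q = 3 := by omega
    exact P.not_dvd_index hqP
  refine hG (isCyclic_of_surjective (P : Subgroup G).subtype fun x => ⟨⟨x, ?_⟩, rfl⟩)
  rw [Subgroup.index_eq_one.1 hindex]
  exact Subgroup.mem_top x

theorem exists_isComplement'_of_psiC_le {G : Type*} [Group G] [Fintype G]
    (hodd : Odd (Nat.card G)) (hG : ¬ IsCyclic G) (hψ : psiC (Nat.card G) ≤ 2 * psi G) :
    ∃ (p : ℕ) (P H : Subgroup G), p.Prime ∧ 5 ≤ p ∧ IsPGroup p P ∧ P ≠ ⊥ ∧ P.Normal ∧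
      IsCyclic P ∧ P.IsComplement' H ∧ (Nat.card P).Coprime (Nat.card H) := by
  have : Nontrivial G := not_subsingleton_iff_nontrivial.1 fun _ => hG inferInstance
  obtain ⟨p, hpG, hmax⟩ := exists_mem_primeFactors_subset_Ico hodd Finite.one_lt_card.ne'
  have hp3 : 3 ≤ p := (Finset.mem_Ico.1 (hmax hpG)).1
  have hp : p.Prime := Nat.prime_of_mem_primeFactors hpG
  have : Fact p.Prime := ⟨hp⟩
  obtain ⟨P, hPn, hPc⟩ := exists_normal_isCyclic_sylow_of_psiC_le hp3 hmax hψ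
  obtain ⟨H, hPH⟩ := Subgroup.exists_right_complement'_of_coprime P.card_coprime_index
  exact ⟨p, P, H, hp, five_le_of_isCyclic_sylow hG hp3 hmax P, P.isPGroup',
    P.ne_bot_of_dvd_card (Nat.dvd_of_mem_primeFactors hpG), hPn, hPc, hPH,
    hPH.symm.index_eq_card ▸ P.card_coprime_index⟩

end LargestPrime

theorem sum_orders_noncyclic_odd {G : Type*} [Group G] [Fintype G] (n : ℕ)
    (hn : Fintype.card G = n) (hodd : Odd n) (hG : ¬ IsCyclic G) :
    2 * psi G < psiC n := by
  classical
  induction n using Nat.strong_induction_on generalizing G with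
  | _ n ih =>
  obtain rfl : Nat.card G = n := Nat.card_eq_fintype_card.trans hn
  by_contra! hle
  obtain ⟨p, P, H, hp, hp5, hP, hP1, hPn, hPc, hPH, hco⟩ :=
    exists_isComplement'_of_psiC_le hodd hG hle
  have : Fact p.Prime := ⟨hp⟩
  have hHodd : Odd (Nat.card H) := hodd.of_dvd_nat H.card_subgroup_dvd_card
  rw [← hPH.card_mul_card, psiC_mul_of_coprime hco, ← psi_eq_psiC_of_isCyclic] at hle
  by_cases hH : IsCyclic H
  · rw [← psi_eq_psiC_of_isCyclic] at hle
    exact hle.not_gt (two_mul_psi_lt_psi_mul_psi_of_isComplement' hP hp5 hPH hco hHodd hG)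
  · have hHlt : Nat.card H < Nat.card G :=
      hPH.card_mul_card ▸ lt_mul_left Nat.card_pos (P.one_lt_card_iff_ne_bot.2 hP1)
    have hψH := ih _ hHlt Nat.card_eq_fintype_card.symm hHodd hH
    have hψG := psi_le_psi_mul_psi_of_isComplement' hP hPH hco
    have hψP : 0 < psi P := Nat.card_pos.trans_le card_le_psi
    exact hle.not_gt <| calc
      2 * psi G ≤ psi P * (2 * psi H) := by linarith
      _ < psi P * psiC (Nat.card H) := Nat.mul_lt_mul_of_pos_left hψH hψP
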